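/- Every simple H_k-module on which the center of H_k acts by scalars is isomorphic to one of the following: M_1(0,y) or M_1(-1,y) with y ∈ k^×; M_2(y) or M̃_2(y) with y ∈ k^×; K_6(z,y,y') with z, y, y' ∈ k^×, y^2 ≠ y' and y'^2 ≠ zy; M_3(z,y), M̃_3(z,y), N_3(z,y) or Ñ_3(z,y) with z, y ∈ k^× and y^3 ≠ z; L_6(z,y) or L̃_6(z,y) with z, y ∈ k^×; P_3(z) or P̃_3(z) with z ∈ k^×. -/

import Mathlib

/-- The defining relations of the affine Hecke algebra of type `A_2` (for `Gl_3`),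
on the free algebra on four generators `T = X 0`, `T⁻¹ = X 1`, `S_1 = X 2`, `S_2 = X 3`. -/
inductive HeckeRel (R : Type) [CommRing R] (q : R) :
    FreeAlgebra R (Fin 4) → FreeAlgebra R (Fin 4) → Prop
  | TTinv : HeckeRel R q (FreeAlgebra.ι R 0 * FreeAlgebra.ι R 1) 1
  | TinvT : HeckeRel R q (FreeAlgebra.ι R 1 * FreeAlgebra.ι R 0) 1
  | quad : HeckeRel R q
      ((FreeAlgebra.ι R 2 + 1) * (FreeAlgebra.ι R 2 - algebraMap R (FreeAlgebra R (Fin 4)) q)) 0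
  | T3S1 : HeckeRel R q (FreeAlgebra.ι R 0 ^ 3 * FreeAlgebra.ι R 2)
      (FreeAlgebra.ι R 2 * FreeAlgebra.ι R 0 ^ 3)
  | braid : HeckeRel R q (FreeAlgebra.ι R 2 * FreeAlgebra.ι R 3 * FreeAlgebra.ι R 2)
      (FreeAlgebra.ι R 3 * FreeAlgebra.ι R 2 * FreeAlgebra.ι R 3)
  | TS2 : HeckeRel R q (FreeAlgebra.ι R 0 * FreeAlgebra.ι R 3)
      (FreeAlgebra.ι R 2 * FreeAlgebra.ι R 0)

/-- The affine Hecke algebra `H_R` with parameter `q ∈ R`. -/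
abbrev HeckeAlg (R : Type) [CommRing R] (q : R) := RingQuot (HeckeRel R q)

namespace HeckeAlg

variable (R : Type) [CommRing R] (q : R)

noncomputable def gen (i : Fin 4) : HeckeAlg R q :=
  RingQuot.mkAlgHom R (HeckeRel R q) (FreeAlgebra.ι R i)

noncomputable def T : HeckeAlg R q := gen R q 0
noncomputable def Tinv : HeckeAlg R q := gen R q 1
noncomputable def S1 : HeckeAlg R q := gen R q 2
noncomputable def S2 : HeckeAlg R q := gen R q 3

theorem T_mul_Tinv : T R q * Tinv R q = 1 := by
  simpa [T, Tinv, gen, map_mul, map_one] using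
    RingQuot.mkAlgHom_rel R (HeckeRel.TTinv (R := R) (q := q))

theorem Tinv_mul_T : Tinv R q * T R q = 1 := by
  simpa [T, Tinv, gen, map_mul, map_one] using
    RingQuot.mkAlgHom_rel R (HeckeRel.TinvT (R := R) (q := q))

theorem quad_rel : (S1 R q + 1) * (S1 R q - algebraMap R (HeckeAlg R q) q) = 0 := by
  simpa [S1, gen, map_mul, map_add, map_sub, map_one, map_zero, AlgHom.commutes] using
    RingQuot.mkAlgHom_rel R (HeckeRel.quad (R := R) (q := q))

theorem T3_mul_S1 : T R q ^ 3 * S1 R q = S1 R q * T R q ^ 3 := by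
  simpa [T, S1, gen, map_mul, map_pow] using
    RingQuot.mkAlgHom_rel R (HeckeRel.T3S1 (R := R) (q := q))

theorem braid_rel : S1 R q * S2 R q * S1 R q = S2 R q * S1 R q * S2 R q := by
  simpa [S1, S2, gen, map_mul] using
    RingQuot.mkAlgHom_rel R (HeckeRel.braid (R := R) (q := q))

theorem T_mul_S2 : T R q * S2 R q = S1 R q * T R q := by
  simpa [T, S1, S2, gen, map_mul] using
    RingQuot.mkAlgHom_rel R (HeckeRel.TS2 (R := R) (q := q))

/-- The canonical (base change) ring homomorphism `H_R → H_S` induced by a ring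
homomorphism `R → S` sending the parameter `q` to the parameter `q'`. -/
noncomputable def map {R S : Type} [CommRing R] [CommRing S] (f : R →+* S) (q : R) (q' : S)
    (h : f q = q') : HeckeAlg R q →+* HeckeAlg S q' := by
  subst h
  letI : Algebra R (HeckeAlg S (f q)) :=
    RingHom.toAlgebra' ((algebraMap S (HeckeAlg S (f q))).comp f)
      (fun c x => by simpa using Algebra.commutes (f c) x)
  refine RingQuot.lift
    ⟨((FreeAlgebra.lift R fun i => gen S (f q) i : _ →ₐ[R] HeckeAlg S (f q)) :
        FreeAlgebra R (Fin 4) →+* HeckeAlg S (f q)), ?_⟩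
  have key : ∀ i : Fin 4,
      (FreeAlgebra.lift R fun j => gen S (f q) j) (FreeAlgebra.ι R i) = gen S (f q) i :=
    fun i => FreeAlgebra.lift_ι_apply _ _
  have keyq : (FreeAlgebra.lift R fun j => gen S (f q) j)
      (algebraMap R (FreeAlgebra R (Fin 4)) q) = algebraMap S (HeckeAlg S (f q)) (f q) := by
    rw [AlgHom.commutes]
    rfl
  intro a b hab
  cases hab with
  | TTinv => simpa [key, T, Tinv] using T_mul_Tinv S (f q)
  | TinvT => simpa [key, T, Tinv] using Tinv_mul_T S (f q)
  | quad => simpa [key, keyq, S1] using quad_rel S (f q)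
  | T3S1 => simpa [key, T, S1] using T3_mul_S1 S (f q)
  | braid => simpa [key, S1, S2] using braid_rel S (f q)
  | TS2 => simpa [key, T, S1, S2] using T_mul_S2 S (f q)

/-- `S_1⁻¹ = q⁻¹ (S_1 - q + 1)`, where `qi` is an inverse of `q` in `R`. -/
noncomputable def S1i (qi : R) : HeckeAlg R q :=
  algebraMap R (HeckeAlg R q) qi * (S1 R q - algebraMap R (HeckeAlg R q) q + 1)

/-- `S_2⁻¹ = q⁻¹ (S_2 - q + 1)`, where `qi` is an inverse of `q` in `R`. -/
noncomputable def S2i (qi : R) : HeckeAlg R q :=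
  algebraMap R (HeckeAlg R q) qi * (S2 R q - algebraMap R (HeckeAlg R q) q + 1)

/-- The Bernstein elements `Y_1 = q S_1⁻¹ S_2⁻¹ T`, `Y_2 = S_2⁻¹ T S_1`,
`Y_3 = q⁻¹ T S_1 S_2`, where `qi` is an inverse of `q` in `R`. -/
noncomputable def Y (qi : R) : Fin 3 → HeckeAlg R q :=
  ![algebraMap R (HeckeAlg R q) q * S1i R q qi * S2i R q qi * T R q,
    S2i R q qi * T R q * S1 R q,
    algebraMap R (HeckeAlg R q) qi * T R q * S1 R q * S2 R q]

end HeckeAlg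

noncomputable section

variable (p : ℕ) [Fact p.Prime] (k : Type) [Field k] [IsAlgClosed k] [CharP k p]

/-- `H_k = H ⊗_{ℤ[q]} k` with `q ↦ 0`. -/
abbrev Hk : Type := HeckeAlg k 0

/-- The action of `T` on a `1`-dimensional space: multiplication by `c`. -/
def Tmat1 (c : k) : Module.End k (Fin 1 → k) := Matrix.mulVecLin !![c]

/-- The action of `T` on the `2`-dimensional space with basis `w, Tw` where
`T(Tw) = -y²w - yTw`. -/
def Tmat2 (y : k) : Module.End k (Fin 2 → k) := Matrix.mulVecLin !![0, -y^2; 1, -y]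

/-- The action of `T` on the `3`-dimensional space with basis `v, Tv, T²v` where
`T(T²v) = zv`. -/
def Tmat3 (z : k) : Module.End k (Fin 3 → k) := Matrix.mulVecLin !![0, 0, z; 1, 0, 0; 0, 1, 0]

/-- The action of `T` on the `6`-dimensional space with basis `v, Tv, T²v, w, Tw, T²w`
where `T(T²v) = zv`, `T(T²w) = zw`. -/
def Tmat6 (z : k) : Module.End k (Fin 6 → k) := Matrix.mulVecLin
  !![0, 0, z, 0, 0, 0;
     1, 0, 0, 0, 0, 0;
     0, 1, 0, 0, 0, 0;
     0, 0, 0, 0, 0, z;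
     0, 0, 0, 1, 0, 0;
     0, 0, 0, 0, 1, 0]

/-- The action of `S_1` on `L_6(z,y)`: `S_1v = 0`, `S_1(Tv) = T²w`, `S_1(T²v) = -T²v`,
`S_1w = -w`, `S_1(Tw) = (y/z)T²v`, `S_1(T²w) = -T²w`. -/
def SL6 (z y : k) : Module.End k (Fin 6 → k) := Matrix.mulVecLin
  !![0, 0, 0,  0,  0,     0;
     0, 0, 0,  0,  0,     0;
     0, 0, -1, 0,  y / z, 0;
     0, 0, 0,  -1, 0,     0;
     0, 0, 0,  0,  0,     0;
     0, 1, 0,  0,  0,     -1]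

/-- The action of `S_1` on `L̃_6(z,y)`: as on `L_6(z,y)` except `S_1v = w`, `S_1(Tv) = 0`. -/
def SLt6 (z y : k) : Module.End k (Fin 6 → k) := Matrix.mulVecLin
  !![0, 0, 0,  0,  0,     0;
     0, 0, 0,  0,  0,     0;
     0, 0, -1, 0,  y / z, 0;
     1, 0, 0,  -1, 0,     0;
     0, 0, 0,  0,  0,     0;
     0, 0, 0,  0,  0,     -1]

/-- The action of `S_1` on `K_6(z,y,y')`: `S_1v = w`, `S_1(Tv) = (y/y')T²w`,
`S_1(T²v) = -T²v`, `S_1w = -w`, `S_1(Tw) = (y'/z)T²v`, `S_1(T²w) = -T²w`. -/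
def SK6 (z y y' : k) : Module.End k (Fin 6 → k) := Matrix.mulVecLin
  !![0, 0,      0,  0,  0,      0;
     0, 0,      0,  0,  0,      0;
     0, 0,      -1, 0,  y' / z, 0;
     1, 0,      0,  -1, 0,      0;
     0, 0,      0,  0,  0,      0;
     0, y / y', 0,  0,  0,      -1]

/-- The action of `S_1` on `M_3(z,y)`: `S_1v = 0`, `S_1(Tv) = y⁻¹T²v`, `S_1(T²v) = -T²v`. -/
def SM3 (y : k) : Module.End k (Fin 3 → k) := Matrix.mulVecLin
  !![0, 0, 0; 0, 0, 0; 0, y⁻¹, -1]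

/-- The action of `S_1` on `M̃_3(z,y)`: `S_1v = -v`, `S_1(Tv) = -y⁻¹T²v`, `S_1(T²v) = -T²v`. -/
def SMt3 (y : k) : Module.End k (Fin 3 → k) := Matrix.mulVecLin
  !![-1, 0, 0; 0, 0, 0; 0, -y⁻¹, -1]

/-- The action of `S_1` on `N_3(z,y)`: `S_1v = -v`, `S_1(Tv) = 0`, `S_1(T²v) = -yTv - T²v`. -/
def SN3 (y : k) : Module.End k (Fin 3 → k) := Matrix.mulVecLin
  !![-1, 0, 0; 0, 0, -y; 0, 0, -1]

/-- The action of `S_1` on `Ñ_3(z,y)`: `S_1v = 0`, `S_1(Tv) = 0`, `S_1(T²v) = yTv - T²v`. -/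
def SNt3 (y : k) : Module.End k (Fin 3 → k) := Matrix.mulVecLin
  !![0, 0, 0; 0, 0, y; 0, 0, -1]

/-- The action of `S_1` on `P_3(z)`: `S_1v = 0`, `S_1(Tv) = 0`, `S_1(T²v) = -T²v`. -/
def SP3 : Module.End k (Fin 3 → k) := Matrix.mulVecLin
  !![0, 0, 0; 0, 0, 0; 0, 0, -1]

/-- The action of `S_1` on `P̃_3(z)`: `S_1v = -v`, `S_1(Tv) = 0`, `S_1(T²v) = -T²v`. -/
def SPt3 : Module.End k (Fin 3 → k) := Matrix.mulVecLin
  !![-1, 0, 0; 0, 0, 0; 0, 0, -1]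

/-- The action of `S_1` on `M_2(y)`: `S_1w = -w`, `S_1(Tw) = 0`. -/
def SM2 : Module.End k (Fin 2 → k) := Matrix.mulVecLin !![-1, 0; 0, 0]

/-- The action of `S_1` on `M̃_2(y)`: `S_1w = 0`, `S_1(Tw) = -Tw`. -/
def SMt2 : Module.End k (Fin 2 → k) := Matrix.mulVecLin !![0, 0; 0, -1]

end

noncomputable section

variable (p : ℕ) [Fact p.Prime] (k : Type) [Field k] [IsAlgClosed k] [CharP k p]

/-- The `H_k`-module given by `(V, ρ)` is isomorphic to the `H_k`-module structure on `k^n`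
on which `T` acts by `Tm` and `S_1` acts by `Sm` (a `k`-linear isomorphism intertwining the
actions of the generators `T` and `S_1` of `H_k` is exactly an isomorphism of
`H_k`-modules). -/
def IsoTo (V : Type) [AddCommGroup V] [Module k V]
    (ρ : Hk k →ₐ[k] Module.End k V) (n : ℕ) (Tm Sm : Module.End k (Fin n → k)) : Prop :=
  ∃ g : V ≃ₗ[k] (Fin n → k),
    (∀ x : V, g (ρ (HeckeAlg.T k 0) x) = Tm (g x)) ∧
    (∀ x : V, g (ρ (HeckeAlg.S1 k 0) x) = Sm (g x))

end

section Aux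

theorem hecke_ring_aux {A : Type} [Ring A] {t ti s s2 s0 : A} (h1 : t * ti = 1) (h2 : ti * t = 1)
    (hq : s * s = -s) (h3 : t ^ 3 * s = s * t ^ 3) (hb : s * s2 * s = s2 * s * s2)
    (hT : t * s2 = s * t) (h0 : s0 = t * s * ti) :
    s0 * t = t * s ∧ s2 * t = t * s0 ∧ s0 * s0 = -s0 ∧ s2 * s2 = -s2 ∧
    s0 * s * s0 = s * s0 * s ∧ s2 * s0 * s2 = s0 * s2 * s0 := by
  have ht : ∀ a b : A, t * a = t * b → a = b := fun a b h => by
    have := congrArg (ti * ·) h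
    simpa [← mul_assoc, h2] using this
  have ht' : ∀ a b : A, a * t = b * t → a = b := fun a b h => by
    have := congrArg (· * ti) h
    simpa [mul_assoc, h1] using this
  have e1 : s0 * t = t * s := by rw [h0, mul_assoc, h2, mul_one]
  have e2 : s2 * t = t * s0 := by
    apply ht
    apply ht'
    calc t * (s2 * t) * t = (t * s2) * t * t := by noncomm_ring
      _ = s * t ^ 3 := by rw [hT]; noncomm_ring
      _ = t * t * (t * s) := by rw [← h3]; noncomm_ring
      _ = t * (t * s0) * t := by rw [← e1]; noncomm_ring
  refine ⟨e1, e2, ?_, ?_, ?_, ?_⟩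
  · apply ht'
    calc s0 * s0 * t = t * (s * s) := by rw [mul_assoc, e1, ← mul_assoc, e1, mul_assoc]
      _ = -s0 * t := by rw [hq, neg_mul, e1, mul_neg]
  · apply ht
    calc t * (s2 * s2) = (s * s) * t := by rw [← mul_assoc, hT, mul_assoc, hT, mul_assoc]
      _ = t * -s2 := by rw [hq, neg_mul, mul_neg, hT]
  · apply ht'
    calc s0 * s * s0 * t = s0 * (s * t) * s := by rw [mul_assoc _ s0, e1]; noncomm_ring
      _ = (s0 * t) * s2 * s := by rw [← hT]; noncomm_ring
      _ = t * (s * s2 * s) := by rw [e1]; noncomm_ring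
      _ = (t * s2) * s * s2 := by rw [hb]; noncomm_ring
      _ = s * (t * s) * s2 := by rw [hT]; noncomm_ring
      _ = s * s0 * (t * s2) := by rw [← e1]; noncomm_ring
      _ = s * s0 * s * t := by rw [hT]; noncomm_ring
  · apply ht
    calc t * (s2 * s0 * s2) = (t * s2) * s0 * s2 := by noncomm_ring
      _ = s * (t * s0) * s2 := by rw [hT]; noncomm_ring
      _ = s * s2 * (t * s2) := by rw [← e2]; noncomm_ring
      _ = (s * s2 * s) * t := by rw [hT]; noncomm_ring
      _ = s2 * s * (s2 * t) := by rw [hb]; noncomm_ring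
      _ = s2 * (s * t) * s0 := by rw [e2]; noncomm_ring
      _ = (s2 * t) * s2 * s0 := by rw [← hT]; noncomm_ring
      _ = t * (s0 * s2 * s0) := by rw [e2]; noncomm_ring

theorem hecke_comm_one {A : Type} [Ring A] {t s s2 s0 : A}
    (hq : s * s = -s) (hq2 : s2 * s2 = -s2)
    (hT : t * s2 = s * t) (e1 : s0 * t = t * s) (e2 : s2 * t = t * s0)
    (hb : s * s2 * s = s2 * s * s2) :
    t * (t * (1 + s + s2 + s0 + s * s2 + s2 * s0 + s0 * s)) =
      t * (1 + s + s2 + s0 + s * s2 + s2 * s0 + s0 * s) * t ∧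
    s * (t * (1 + s + s2 + s0 + s * s2 + s2 * s0 + s0 * s)) =
      t * (1 + s + s2 + s0 + s * s2 + s2 * s0 + s0 * s) * s := by
  constructor
  · have a1 : t * (s * s2) = (s0 * s) * t := by rw [← mul_assoc, ← e1, mul_assoc, hT, mul_assoc]
    have a2 : t * (s2 * s0) = (s * s2) * t := by rw [← mul_assoc, hT, mul_assoc, ← e2, mul_assoc]
    have a3 : t * (s0 * s) = (s2 * s0) * t := by rw [← mul_assoc, ← e2, mul_assoc, ← e1, mul_assoc]
    have : t * (1 + s + s2 + s0 + s * s2 + s2 * s0 + s0 * s) =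
        (1 + s + s2 + s0 + s * s2 + s2 * s0 + s0 * s) * t := by
      simp only [mul_add, add_mul, a1, a2, a3, hT, ← e1, ← e2, mul_one, one_mul]
      abel
    rw [mul_assoc, ← this]
  · rw [← mul_assoc, ← hT, mul_assoc, mul_assoc]
    congr 1
    have b1 : s2 * (1 + s + s2 + s0 + s * s2 + s2 * s0 + s0 * s) -
        (1 + s + s2 + s0 + s * s2 + s2 * s0 + s0 * s) * s =
        (s2 * s2 + s2) * (1 + s0) + (s2 * s * s2 - s * s2 * s) - (1 + s0) * (s * s + s) := by
      noncomm_ring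
    rw [hq2, hb, hq] at b1
    simpa [sub_eq_zero] using b1

theorem Hk_induction {k : Type} [Field k] (P : Hk k → Prop)
    (hc : ∀ c : k, P (algebraMap k (Hk k) c)) (hadd : ∀ a b, P a → P b → P (a + b))
    (hmul : ∀ a b, P a → P b → P (a * b)) (hT : P (HeckeAlg.T k 0))
    (hTi : P (HeckeAlg.Tinv k 0)) (hS : P (HeckeAlg.S1 k 0)) (a : Hk k) : P a := by
  have hS2 : P (HeckeAlg.S2 k 0) := by
    have : HeckeAlg.S2 k 0 = HeckeAlg.Tinv k 0 * (HeckeAlg.S1 k 0 * HeckeAlg.T k 0) := by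
      rw [← HeckeAlg.T_mul_S2, ← mul_assoc, HeckeAlg.Tinv_mul_T, one_mul]
    rw [this]
    exact hmul _ _ hTi (hmul _ _ hS hT)
  obtain ⟨a, rfl⟩ := RingQuot.mkAlgHom_surjective k (HeckeRel k 0) a
  induction a using FreeAlgebra.induction with
  | grade0 r => rw [AlgHom.commutes]; exact hc r
  | grade1 i =>
    fin_cases i
    · exact hT
    · exact hTi
    · exact hS
    · exact hS2
  | mul a b ha hb => rw [map_mul]; exact hmul _ _ ha hb
  | add a b ha hb => rw [map_add]; exact hadd _ _ ha hb

theorem Hk_center {k : Type} [Field k] (x : Hk k)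
    (hT : HeckeAlg.T k 0 * x = x * HeckeAlg.T k 0)
    (hS : HeckeAlg.S1 k 0 * x = x * HeckeAlg.S1 k 0) : x ∈ Subring.center (Hk k) := by
  rw [Subring.mem_center_iff]
  intro g
  refine Hk_induction (fun g => g * x = x * g) ?_ ?_ ?_ hT ?_ hS g
  · intro c; exact Algebra.commutes c x
  · intro a b ha hb; rw [add_mul, mul_add, ha, hb]
  · intro a b ha hb; rw [mul_assoc, hb, ← mul_assoc, ha, mul_assoc]
  · have h1 := HeckeAlg.T_mul_Tinv k 0
    have h2 := HeckeAlg.Tinv_mul_T k 0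
    calc HeckeAlg.Tinv k 0 * x = HeckeAlg.Tinv k 0 * (x * HeckeAlg.T k 0) * HeckeAlg.Tinv k 0 := by
          rw [mul_assoc, mul_assoc x, h1, mul_one]
      _ = x * HeckeAlg.Tinv k 0 := by rw [← hT, ← mul_assoc, h2, one_mul]

/-- The operator-level data extracted from a simple module with central character. -/
structure Dat (k V : Type) [Field k] [AddCommGroup V] [Module k V]
    (t s s0 s2 : Module.End k V) (z c1 c2 : k) : Prop where
  z0 : z ≠ 0
  t3 : ∀ x, t (t (t x)) = z • x
  ss : ∀ x, s (s x) = -s x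
  s0s0 : ∀ x, s0 (s0 x) = -s0 x
  s2s2 : ∀ x, s2 (s2 x) = -s2 x
  s0t : ∀ x, s0 (t x) = t (s x)
  st : ∀ x, s (t x) = t (s2 x)
  s2t : ∀ x, s2 (t x) = t (s0 x)
  br1 : ∀ x, s (s2 (s x)) = s2 (s (s2 x))
  br2 : ∀ x, s0 (s (s0 x)) = s (s0 (s x))
  br3 : ∀ x, s2 (s0 (s2 x)) = s0 (s2 (s0 x))
  e1 : ∀ x, c1 • x = t (x + s x + s2 x + s0 x + s (s2 x) + s2 (s0 x) + s0 (s x))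
  e2 : ∀ x, c2 • t x = x + s x + s2 x + s0 x + s2 (s x) + s0 (s2 x) + s (s0 x)
  simple : ∀ W : Submodule k V, (∀ x ∈ W, t x ∈ W) → (∀ x ∈ W, s x ∈ W) → W = ⊥ ∨ W = ⊤

theorem dat_exists (k : Type) [Field k]
    (V : Type) [AddCommGroup V] [Module k V] [Nontrivial V]
    (ρ : Hk k →ₐ[k] Module.End k V)
    (hsimple : ∀ W : Submodule k V, (∀ a : Hk k, ∀ x ∈ W, ρ a x ∈ W) → W = ⊥ ∨ W = ⊤)
    (hcentral : ∀ a ∈ Subring.center (Hk k), ∃ c : k,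
      ρ a = algebraMap k (Module.End k V) c) :
    ∃ (s0 s2 : Module.End k V) (z c1 c2 : k),
      Dat k V (ρ (HeckeAlg.T k 0)) (ρ (HeckeAlg.S1 k 0)) s0 s2 z c1 c2 := by
  have h1 := HeckeAlg.T_mul_Tinv k 0
  have h2 := HeckeAlg.Tinv_mul_T k 0
  have hq : HeckeAlg.S1 k 0 * HeckeAlg.S1 k 0 = - HeckeAlg.S1 k 0 := by
    have := HeckeAlg.quad_rel k 0
    rw [map_zero, sub_zero, add_mul, one_mul] at this
    exact eq_neg_of_add_eq_zero_left this
  have h3 := HeckeAlg.T3_mul_S1 k 0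
  have hb := HeckeAlg.braid_rel k 0
  have hT := HeckeAlg.T_mul_S2 k 0
  have hTc : HeckeAlg.T k 0 ^ 3 ∈ Subring.center (Hk k) :=
    Hk_center _ (by noncomm_ring) h3.symm
  obtain ⟨z, hz⟩ := hcentral _ hTc
  generalize hS1' : HeckeAlg.S1 k 0 = s at *
  generalize hT1' : HeckeAlg.T k 0 = t at *
  generalize hTi' : HeckeAlg.Tinv k 0 = ti at *
  generalize hS2' : HeckeAlg.S2 k 0 = s2 at *
  obtain ⟨s0, h0⟩ : ∃ s0, s0 = t * s * ti := ⟨_, rfl⟩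
  obtain ⟨e1, e2, q0, q2, b2, b3⟩ := hecke_ring_aux h1 h2 hq h3 hb hT h0
  have E1 := hecke_comm_one hq q2 hT e1 e2 hb
  have flip : ∀ a b : Hk k, a * t = t * b → ti * a = b * ti := fun a b h => by
    calc ti * a = ti * (a * t) * ti := by rw [mul_assoc, mul_assoc a, h1, mul_one]
      _ = b * ti := by rw [h, ← mul_assoc, h2, one_mul]
  have E2 := hecke_comm_one (t := ti) (s := s) (s2 := s0) (s0 := s2) hq q0 (flip _ _ e1)
    (flip _ _ hT.symm).symm (flip _ _ e2).symm b2.symm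
  obtain ⟨c1, hc1⟩ := hcentral (t * (1 + s + s2 + s0 + s * s2 + s2 * s0 + s0 * s))
    (Hk_center _ (by rw [hT1']; exact E1.1) (by rw [hS1']; exact E1.2))
  have hE2 : t * (ti * (1 + s + s0 + s2 + s * s0 + s0 * s2 + s2 * s)) =
      ti * (1 + s + s0 + s2 + s * s0 + s0 * s2 + s2 * s) * t := by
    have := E2.1
    calc _ = t * (ti * (ti * (1 + s + s0 + s2 + s * s0 + s0 * s2 + s2 * s))) * t := by
          rw [this]; simp only [mul_assoc, h2, mul_one]
      _ = _ := by rw [← mul_assoc t, h1, one_mul]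
  obtain ⟨c2, hc2⟩ := hcentral (ti * (1 + s + s0 + s2 + s * s0 + s0 * s2 + s2 * s))
    (Hk_center _ (by rw [hT1']; exact hE2) (by rw [hS1']; exact E2.2))
  have ap : ∀ a b : Hk k, a = b → ∀ x, ρ a x = ρ b x := fun a b h x => by rw [h]
  have t3 : ∀ x, ρ t (ρ t (ρ t x)) = z • x := fun x => by
    have := congrArg (· x) hz
    simpa [pow_succ, Module.algebraMap_end_apply] using this
  have tinj : ∀ x, ρ ti (ρ t x) = x := fun x => by simpa using ap _ _ h2 x
  have tinj' : ∀ x, ρ t (ρ ti x) = x := fun x => by simpa using ap _ _ h1 x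
  have z0 : z ≠ 0 := by
    rintro rfl
    obtain ⟨x, hx⟩ := exists_ne (0 : V)
    apply hx
    have := congrArg (fun y => ρ ti (ρ ti (ρ ti y))) (t3 x)
    simpa [tinj] using this
  refine ⟨ρ s0, ρ s2, z, c1, c2, z0, t3, ?_, ?_, ?_, ?_, ?_, ?_, ?_, ?_, ?_, ?_, ?_, ?_⟩
  · intro x; simpa using ap _ _ hq x
  · intro x; simpa using ap _ _ q0 x
  · intro x; simpa using ap _ _ q2 x
  · intro x; simpa using ap _ _ e1 x
  · intro x; simpa using (ap _ _ hT x).symm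
  · intro x; simpa using ap _ _ e2 x
  · intro x; simpa using ap _ _ hb x
  · intro x; simpa using ap _ _ b2 x
  · intro x; simpa using ap _ _ b3 x
  · intro x
    have := congrArg (· x) hc1
    simpa [Module.algebraMap_end_apply] using this.symm
  · intro x
    have := congrArg (fun f => ρ t (f x)) hc2
    simp only [map_mul, Module.End.mul_apply, tinj', Module.algebraMap_end_apply, map_smul] at this
    rw [← this]
    simp only [map_add, map_mul, map_one, Module.End.mul_apply, LinearMap.add_apply,
      Module.End.one_apply]
    abel
  · intro W hWt hWs
    apply hsimple
    intro a
    refine Hk_induction (fun a => ∀ x ∈ W, ρ a x ∈ W) ?_ ?_ ?_ ?_ ?_ ?_ a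
    · intro c x hx
      simpa [Module.algebraMap_end_apply] using W.smul_mem c hx
    · intro a b ha hb x hx
      simpa using W.add_mem (ha x hx) (hb x hx)
    · intro a b ha hb x hx
      simpa using ha _ (hb x hx)
    · rw [hT1']; exact hWt
    · intro x hx
      rw [hTi']
      have : ρ ti x = z⁻¹ • ρ t (ρ t x) := by
        have := congrArg (fun y => ρ ti y) (t3 x)
        simp only [tinj, map_smul] at this
        rw [this, smul_smul, inv_mul_cancel₀ z0, one_smul]
      rw [this]
      exact W.smul_mem _ (hWt _ (hWt _ hx))
    · rw [hS1']
      exact hWs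

def IsoP (k V : Type) [Field k] [AddCommGroup V] [Module k V] (t s : Module.End k V)
    (n : ℕ) (Tm Sm : Module.End k (Fin n → k)) : Prop :=
  ∃ g : V ≃ₗ[k] (Fin n → k), (∀ x : V, g (t x) = Tm (g x)) ∧ (∀ x : V, g (s x) = Sm (g x))

theorem iso_of {k V : Type} [Field k] [AddCommGroup V] [Module k V]
    {t s s0 s2 : Module.End k V} {z c1 c2 : k} (D : Dat k V t s s0 s2 z c1 c2)
    {n : ℕ} (hn : 0 < n) (b : Fin n → V) (hb : LinearIndependent k b)
    (M N : Matrix (Fin n) (Fin n) k)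
    (hM : ∀ j, t (b j) = ∑ i, M i j • b i) (hN : ∀ j, s (b j) = ∑ i, N i j • b i) :
    IsoP k V t s n (Matrix.mulVecLin M) (Matrix.mulVecLin N) := by
  have stab : ∀ (f : Module.End k V) (M : Matrix (Fin n) (Fin n) k),
      (∀ j, f (b j) = ∑ i, M i j • b i) →
      ∀ x ∈ Submodule.span k (Set.range b), f x ∈ Submodule.span k (Set.range b) := by
    intro f M hM x hx
    have : Submodule.span k (Set.range b) ≤ (Submodule.span k (Set.range b)).comap f := by
      rw [Submodule.span_le]
      rintro _ ⟨j, rfl⟩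
      change f (b j) ∈ Submodule.span k (Set.range b)
      rw [hM]
      exact Submodule.sum_mem _ fun i _ =>
        Submodule.smul_mem _ _ (Submodule.subset_span ⟨i, rfl⟩)
    exact this hx
  have htop : Submodule.span k (Set.range b) = ⊤ := by
    refine (D.simple _ (stab t M hM) (stab s N hN)).resolve_left ?_
    intro h
    have : b ⟨0, hn⟩ ∈ Submodule.span k (Set.range b) := Submodule.subset_span ⟨_, rfl⟩
    rw [h, Submodule.mem_bot] at this
    exact hb.ne_zero _ this
  let B := Module.Basis.mk hb htop.ge
  have hB : ∀ j, B j = b j := fun j => by simp [B]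
  have key : ∀ (f : Module.End k V) (M : Matrix (Fin n) (Fin n) k),
      (∀ j, f (b j) = ∑ i, M i j • b i) →
      ∀ x, B.equivFun (f x) = Matrix.mulVecLin M (B.equivFun x) := by
    intro f M hM x
    have : (B.equivFun.toLinearMap ∘ₗ f) = Matrix.mulVecLin M ∘ₗ B.equivFun.toLinearMap := by
      refine B.ext fun j => ?_
      simp only [LinearMap.comp_apply, LinearEquiv.coe_coe, hB, hM, map_sum, map_smul]
      ext i
      simp only [← hB, Module.Basis.equivFun_self]
      simp [Finset.sum_apply, Finsupp.single_apply, Matrix.mulVec, dotProduct]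
    exact congrArg (· x) this
  exact ⟨B.equivFun, key t M hM, key s N hN⟩

end Aux
section Aux2

variable {k V : Type} [Field k] [AddCommGroup V] [Module k V]
    {t s s0 s2 : Module.End k V} {z c1 c2 : k}

/-- The list of modules of the classification. -/
def Good (k V : Type) [Field k] [AddCommGroup V] [Module k V] (t s : Module.End k V) : Prop :=
    (∃ y : kˣ, IsoP k V t s 1 (Tmat1 k (y : k)) (Tmat1 k 0)) ∨
    (∃ y : kˣ, IsoP k V t s 1 (Tmat1 k (y : k)) (Tmat1 k (-1))) ∨
    (∃ y : kˣ, IsoP k V t s 2 (Tmat2 k (y : k)) (SM2 k)) ∨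
    (∃ y : kˣ, IsoP k V t s 2 (Tmat2 k (y : k)) (SMt2 k)) ∨
    (∃ z y y' : kˣ, (y : k) ^ 2 ≠ (y' : k) ∧ (y' : k) ^ 2 ≠ (z : k) * (y : k) ∧
      IsoP k V t s 6 (Tmat6 k (z : k)) (SK6 k (z : k) (y : k) (y' : k))) ∨
    (∃ z y : kˣ, (y : k) ^ 3 ≠ (z : k) ∧ IsoP k V t s 3 (Tmat3 k (z : k)) (SM3 k (y : k))) ∨
    (∃ z y : kˣ, (y : k) ^ 3 ≠ (z : k) ∧ IsoP k V t s 3 (Tmat3 k (z : k)) (SMt3 k (y : k))) ∨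
    (∃ z y : kˣ, (y : k) ^ 3 ≠ (z : k) ∧ IsoP k V t s 3 (Tmat3 k (z : k)) (SN3 k (y : k))) ∨
    (∃ z y : kˣ, (y : k) ^ 3 ≠ (z : k) ∧ IsoP k V t s 3 (Tmat3 k (z : k)) (SNt3 k (y : k))) ∨
    (∃ z y : kˣ, IsoP k V t s 6 (Tmat6 k (z : k)) (SL6 k (z : k) (y : k))) ∨
    (∃ z y : kˣ, IsoP k V t s 6 (Tmat6 k (z : k)) (SLt6 k (z : k) (y : k))) ∨
    (∃ z : kˣ, IsoP k V t s 3 (Tmat3 k (z : k)) (SP3 k)) ∨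
    (∃ z : kˣ, IsoP k V t s 3 (Tmat3 k (z : k)) (SPt3 k))

theorem t_inj (D : Dat k V t s s0 s2 z c1 c2) {x y : V} (h : t x = t y) : x = y := by
  have h1 := D.t3 x
  rw [h, D.t3] at h1
  exact (smul_right_injective V D.z0 h1).symm

theorem t_zero (D : Dat k V t s s0 s2 z c1 c2) {x : V} (h : t x = 0) : x = 0 :=
  t_inj D (by rw [h, map_zero])

theorem iso1 (D : Dat k V t s s0 s2 z c1 c2) {x : V} (hx : x ≠ 0) {y e : k}
    (ht : t x = y • x) (hs : s x = e • x) :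
    ∃ y : kˣ, IsoP k V t s 1 (Tmat1 k (y : k)) (Tmat1 k e) := by
  have hy : y ≠ 0 := by
    rintro rfl
    rw [zero_smul] at ht
    exact hx (t_zero D ht)
  refine ⟨Units.mk0 y hy, iso_of D one_pos ![x] ?_ _ _ ?_ ?_⟩
  · rw [Fintype.linearIndependent_iff]
    intro g hg i
    fin_cases i
    simpa [hx] using hg
  · intro j; fin_cases j; simpa using ht
  · intro j; fin_cases j; simpa using hs

theorem iso2 (D : Dat k V t s s0 s2 z c1 c2) {w : V} {y : k}
    (hi : ∀ α β : k, α • w + β • t w = 0 → α = 0 ∧ β = 0)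
    (ht : t (t w) = -y ^ 2 • w - y • t w) (N : Matrix (Fin 2) (Fin 2) k)
    (h0 : s w = N 0 0 • w + N 1 0 • t w) (h1 : s (t w) = N 0 1 • w + N 1 1 • t w) :
    IsoP k V t s 2 (Tmat2 k y) (Matrix.mulVecLin N) := by
  refine iso_of D two_pos ![w, t w] ?_ _ _ ?_ ?_
  · rw [Fintype.linearIndependent_iff]
    intro g hg
    rw [Fin.sum_univ_two] at hg
    obtain ⟨h0, h1⟩ := hi _ _ hg
    intro i; fin_cases i <;> assumption
  · intro j
    rw [Fin.sum_univ_two]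
    fin_cases j
    · simp
    · simp only [Fin.mk_one, Fin.isValue, Matrix.cons_val_one, Matrix.cons_val_zero, ht]
      simp [sub_eq_add_neg]
  · intro j
    rw [Fin.sum_univ_two]
    fin_cases j
    · exact h0
    · exact h1

theorem iso3 (D : Dat k V t s s0 s2 z c1 c2) {v : V}
    (hi : ∀ α β γ : k, α • v + β • t v + γ • t (t v) = 0 → α = 0 ∧ β = 0 ∧ γ = 0)
    (N : Matrix (Fin 3) (Fin 3) k)
    (h0 : s v = N 0 0 • v + N 1 0 • t v + N 2 0 • t (t v))
    (h1 : s (t v) = N 0 1 • v + N 1 1 • t v + N 2 1 • t (t v))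
    (h2 : s (t (t v)) = N 0 2 • v + N 1 2 • t v + N 2 2 • t (t v)) :
    IsoP k V t s 3 (Tmat3 k z) (Matrix.mulVecLin N) := by
  refine iso_of D three_pos ![v, t v, t (t v)] ?_ _ _ ?_ ?_
  · rw [Fintype.linearIndependent_iff]
    intro g hg
    rw [Fin.sum_univ_three] at hg
    obtain ⟨h0, h1, h2⟩ := hi _ _ _ hg
    intro i; fin_cases i <;> assumption
  · intro j
    rw [Fin.sum_univ_three]
    fin_cases j
    · simp
    · simp
    · simpa using D.t3 v
  · intro j
    rw [Fin.sum_univ_three]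
    fin_cases j
    · exact h0
    · exact h1
    · exact h2

theorem iso6 (D : Dat k V t s s0 s2 z c1 c2) {v w : V}
    (hi : ∀ a0 a1 a2 b0 b1 b2 : k, a0 • v + a1 • t v + a2 • t (t v) + b0 • w + b1 • t w
      + b2 • t (t w) = 0 → a0 = 0 ∧ a1 = 0 ∧ a2 = 0 ∧ b0 = 0 ∧ b1 = 0 ∧ b2 = 0)
    (N : Matrix (Fin 6) (Fin 6) k)
    (hN : ∀ j, s (![v, t v, t (t v), w, t w, t (t w)] j) =
      ∑ i, N i j • ![v, t v, t (t v), w, t w, t (t w)] i) :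
    IsoP k V t s 6 (Tmat6 k z) (Matrix.mulVecLin N) := by
  refine iso_of D (by norm_num) ![v, t v, t (t v), w, t w, t (t w)] ?_ _ _ ?_ hN
  · rw [Fintype.linearIndependent_iff]
    intro g hg
    rw [Fin.sum_univ_six] at hg
    obtain ⟨h0, h1, h2, h3, h4, h5⟩ := hi _ _ _ _ _ _ hg
    intro i; fin_cases i <;> assumption
  · intro j
    rw [Fin.sum_univ_six]
    fin_cases j
    · simp
    · simp
    · simpa using D.t3 v
    · simp
    · simp
    · simpa using D.t3 w

theorem span_one (D : Dat k V t s s0 s2 z c1 c2) {f : V} (hf : f ≠ 0) {y e : k}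
    (ht : t f = y • f) (hs : s f = e • f) (x : V) : ∃ a : k, x = a • f := by
  have h := D.simple (Submodule.span k {f}) ?_ ?_
  · rcases h with h | h
    · rw [Submodule.span_singleton_eq_bot] at h
      exact absurd h hf
    · have hx : x ∈ Submodule.span k {f} := by rw [h]; trivial
      obtain ⟨a, ha⟩ := Submodule.mem_span_singleton.1 hx
      exact ⟨a, ha.symm⟩
  · intro x hx
    obtain ⟨a, rfl⟩ := Submodule.mem_span_singleton.1 hx
    rw [map_smul, ht, smul_smul]
    exact Submodule.mem_span_singleton.2 ⟨_, rfl⟩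
  · intro x hx
    obtain ⟨a, rfl⟩ := Submodule.mem_span_singleton.1 hx
    rw [map_smul, hs, smul_smul]
    exact Submodule.mem_span_singleton.2 ⟨_, rfl⟩

theorem span_three (D : Dat k V t s s0 s2 z c1 c2) {f : V} (hf : f ≠ 0)
    (h0 : ∃ α β γ : k, s f = α • f + β • t f + γ • t (t f))
    (h1 : ∃ α β γ : k, s (t f) = α • f + β • t f + γ • t (t f))
    (h2 : ∃ α β γ : k, s (t (t f)) = α • f + β • t f + γ • t (t f)) (x : V) :
    ∃ α β γ : k, x = α • f + β • t f + γ • t (t f) := by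
  have h := D.simple (Submodule.span k {f, t f, t (t f)}) ?_ ?_
  · rcases h with h | h
    · have : f ∈ Submodule.span k {f, t f, t (t f)} := Submodule.subset_span (by simp)
      rw [h] at this
      exact absurd this hf
    · have hx : x ∈ Submodule.span k {f, t f, t (t f)} := by rw [h]; trivial
      obtain ⟨a, b, c, ha⟩ := Submodule.mem_span_triple.1 hx
      exact ⟨a, b, c, ha.symm⟩
  · intro x hx
    obtain ⟨a, b, c, rfl⟩ := Submodule.mem_span_triple.1 hx
    refine Submodule.mem_span_triple.2 ⟨c * z, a, b, ?_⟩
    simp only [map_add, map_smul, D.t3]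
    module
  · intro x hx
    obtain ⟨a, b, c, rfl⟩ := Submodule.mem_span_triple.1 hx
    obtain ⟨α0, β0, γ0, h0⟩ := h0
    obtain ⟨α1, β1, γ1, h1⟩ := h1
    obtain ⟨α2, β2, γ2, h2⟩ := h2
    refine Submodule.mem_span_triple.2 ⟨a * α0 + b * α1 + c * α2, a * β0 + b * β1 + c * β2,
      a * γ0 + b * γ1 + c * γ2, ?_⟩
    simp only [map_add, map_smul, h0, h1, h2]
    module

/-- The case where all `S_i` act by zero. -/
theorem case_zero [IsAlgClosed k] [Nontrivial V] (D : Dat k V t s s0 s2 z c1 c2)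
    (h : ∀ x, s x = 0) : Good k V t s := by
  obtain ⟨x, hx⟩ := exists_ne (0 : V)
  have hsp := span_three D hx ⟨0, 0, 0, by simp [h]⟩ ⟨0, 0, 0, by simp [h]⟩ ⟨0, 0, 0, by simp [h]⟩
  have : FiniteDimensional k V := by
    classical
    refine ⟨⟨{x, t x, t (t x)}, ?_⟩⟩
    rw [eq_top_iff]
    intro y _
    obtain ⟨a, b, c, h⟩ := hsp y
    simp only [Finset.coe_insert, Finset.coe_singleton]
    exact Submodule.mem_span_triple.2 ⟨a, b, c, h.symm⟩
  obtain ⟨y, hy⟩ := Module.End.exists_eigenvalue t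
  obtain ⟨v, hv⟩ := hy.exists_hasEigenvector
  exact Or.inl (iso1 D hv.2 hv.apply_eq_smul (by simp [h]))

theorem case_Mt2 (D : Dat k V t s s0 s2 z c1 c2) {x : V} (hx : x ≠ 0) {y : k} (hy : y ≠ 0)
    (hz : z = y ^ 3) (h0 : s x = -x) (h1 : s (t x) = y • x) (h2 : s (t (t x)) = 0) :
    Good k V t s := by
  have hf : t (t x) + y • t x + y ^ 2 • x = 0 := by
    by_contra hf
    obtain ⟨a, ha⟩ := span_one D hf (y := y) (e := 0)
      (by simp only [map_add, map_smul, D.t3, hz]; module)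
      (by simp only [map_add, map_smul, h0, h1, h2]; module) x
    apply hx
    have := congrArg s ha
    simp only [map_add, map_smul, h0, h1, h2] at this
    linear_combination (norm := module) -this
  have hf' : t (t x) = -(y • t x) - y ^ 2 • x := by
    linear_combination (norm := module) hf
  refine Or.inr (Or.inr (Or.inr (Or.inl ⟨Units.mk0 y hy,
    iso2 D (w := t (t x)) ?_ ?_ _ ?_ ?_⟩)))
  · intro α β h
    rw [D.t3] at h
    have h' := congrArg s h
    simp only [map_add, map_smul, h0, h2, map_zero, smul_zero, zero_add] at h'
    have hb : β = 0 := by simpa [hx, D.z0] using h'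
    refine ⟨?_, hb⟩
    rw [hb, zero_smul, add_zero, smul_eq_zero] at h
    exact h.resolve_right fun h => hx (t_zero D (t_zero D h))
  · simp only [D.t3, map_smul, Units.val_mk0]
    rw [hf', hz]
    module
  · simp [h2]
  · simp [D.t3, h0]

theorem case_M2 (D : Dat k V t s s0 s2 z c1 c2) {x : V} (hx : x ≠ 0) {y : k} (hy : y ≠ 0)
    (hz : z = y ^ 3) (h0 : s x = -x) (h1 : s (t x) = 0) (h2 : s (t (t x)) = y ^ 2 • x) :
    Good k V t s := by
  have hf : t (t x) + y • t x + y ^ 2 • x = 0 := by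
    by_contra hf
    obtain ⟨a, ha⟩ := span_one D hf (y := y) (e := 0)
      (by simp only [map_add, map_smul, D.t3, hz]; module)
      (by simp only [map_add, map_smul, h0, h1, h2]; module) x
    apply hx
    have := congrArg s ha
    simp only [map_add, map_smul, h0, h1, h2] at this
    linear_combination (norm := module) -this
  have hf' : t (t x) = -(y • t x) - y ^ 2 • x := by
    linear_combination (norm := module) hf
  refine Or.inr (Or.inr (Or.inl ⟨Units.mk0 y hy,
    iso2 D (w := x) ?_ ?_ _ ?_ ?_⟩))
  · intro α β h
    have h' := congrArg s h
    simp only [map_add, map_smul, h0, h1, map_zero, smul_zero, add_zero] at h'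
    have hb : α = 0 := by simpa [hx] using h'
    refine ⟨hb, ?_⟩
    rw [hb, zero_smul, zero_add, smul_eq_zero] at h
    exact h.resolve_right fun h => hx (t_zero D h)
  · rw [Units.val_mk0, hf']
    module
  · simp [h0]
  · simp [h1]

/-- If `z ≠ y³` then relations of the cyclic shape below force a scalar to vanish. -/
theorem case_three (D : Dat k V t s s0 s2 z c1 c2) {x : V} (hx : x ≠ 0) {a b : k}
    (hab : a * b = 0) (ha : a ^ 3 * z ≠ 1) (hb : b ^ 3 ≠ z)
    (h0 : s x = -x) (h1 : s (t x) = b • x) (h2 : s (t (t x)) = (a * z) • x) :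
    Good k V t s := by
  have hz := D.z0
  have hi : ∀ α β γ : k, α • x + β • t x + γ • t (t x) = 0 → α = 0 ∧ β = 0 ∧ γ = 0 := by
    intro α β γ h
    have ev : ∀ α β γ : k, α • x + β • t x + γ • t (t x) = 0 → -α + β * b + γ * a * z = 0 := by
      intro α β γ h
      have h' := congrArg s h
      simp only [map_add, map_smul, h0, h1, h2, map_zero] at h'
      have : (-α + β * b + γ * a * z) • x = 0 := by
        linear_combination (norm := module) h'
      exact (smul_eq_zero.1 this).resolve_right hx
    have hs : ∀ α β γ : k, α • x + β • t x + γ • t (t x) = 0 →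
        (γ * z) • x + α • t x + β • t (t x) = 0 := by
      intro α β γ h
      have h' := congrArg t h
      simp only [map_add, map_smul, D.t3, map_zero] at h'
      linear_combination (norm := module) h'
    have r1 := ev _ _ _ h
    have r2 := ev _ _ _ (hs _ _ _ h)
    have r3 := ev _ _ _ (hs _ _ _ (hs _ _ _ h))
    rcases mul_eq_zero.1 hab with rfl | rfl
    · have e1 : α = β * b := by linear_combination -r1
      have e3 : β = γ * b := mul_right_cancel₀ hz (by linear_combination -r3)
      have : γ * (b ^ 3 - z) = 0 := by
        rw [e1, e3] at r2; linear_combination r2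
      have hγ : γ = 0 := (mul_eq_zero.1 this).resolve_right (sub_ne_zero.2 hb)
      subst hγ
      simp_all
    · have e2 : γ = β * a := mul_right_cancel₀ hz (by linear_combination -r2)
      have e3 : β = α * a := mul_right_cancel₀ hz (by linear_combination -r3)
      have : α * (a ^ 3 * z - 1) = 0 := by
        rw [e2, e3] at r1; linear_combination r1
      have hα : α = 0 := (mul_eq_zero.1 this).resolve_right (sub_ne_zero.2 ha)
      subst hα
      simp_all
  have hi' : ∀ α β γ : k, α • t x + β • t (t x) + γ • t (t (t x)) = 0 →
      α = 0 ∧ β = 0 ∧ γ = 0 := by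
    intro α β γ h
    exact hi _ _ _ (t_zero D (by simpa only [map_add, map_smul] using h))
  by_cases ha0 : a = 0
  · subst ha0
    by_cases hb0 : b = 0
    · subst hb0
      iterate 11 right
      left
      refine ⟨Units.mk0 z hz, iso3 D (v := t x) hi' _ ?_ ?_ ?_⟩
      · simp [h1]
      · simp [h2]
      · simp [D.t3, h0]
    · iterate 8 right
      left
      refine ⟨Units.mk0 z hz, Units.mk0 b hb0, hb,
        iso3 D (v := z • t x + (b * z) • x + b ^ 2 • t (t x)) ?_ _ ?_ ?_ ?_⟩
      · intro α β γ h
        simp only [map_add, map_smul, D.t3] at h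
        obtain ⟨r1, r2, r3⟩ := hi (α * b * z + β * b ^ 2 * z + γ * z ^ 2)
          (α * z + β * b * z + γ * b ^ 2 * z) (α * b ^ 2 + β * z + γ * b * z)
          (by linear_combination (norm := module) h)
        have hbz := sub_ne_zero.2 hb
        have g0 : γ = 0 := by
          have : γ * (z * (b ^ 3 - z)) = 0 := by linear_combination b * r2 - r1
          exact (mul_eq_zero.1 this).resolve_right (mul_ne_zero hz hbz)
        subst g0
        have g1 : β = 0 := by
          have : β * (z * (b ^ 3 - z)) = 0 := by linear_combination b ^ 2 * r2 - z * r3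
          exact (mul_eq_zero.1 this).resolve_right (mul_ne_zero hz hbz)
        subst g1
        simpa [hz] using r2
      · simp only [map_add, map_smul, D.t3, h0, h1, h2]
        simp
        module
      · simp only [map_add, map_smul, D.t3, h0, h1, h2]
        simp
        module
      · simp only [map_add, map_smul, D.t3, h0, h1, h2]
        simp
        module
  · have hb0 : b = 0 := (mul_eq_zero.1 hab).resolve_left ha0
    subst hb0
    iterate 5 right
    left
    refine ⟨Units.mk0 z hz, Units.mk0 a⁻¹ (inv_ne_zero ha0), ?_, iso3 D (v := t x) hi' _ ?_ ?_ ?_⟩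
    · simp only [Units.val_mk0]
      intro h
      apply ha
      rw [← h]
      field_simp
    · simp [h1]
    · simp [h2, D.t3, smul_smul]
    · simp [D.t3, h0]

/-- The case without common `(-1)`-eigenvectors of `S_0` and `S_1`. -/
theorem case_no [IsAlgClosed k] [Nontrivial V] (D : Dat k V t s s0 s2 z c1 c2)
    (hno : ∀ w, s0 w = -w → s w = -w → w = 0) : Good k V t s := by
  by_cases hall : ∀ x, s x = 0
  · exact case_zero D hall
  push Not at hall
  obtain ⟨v0, hv0⟩ := hall
  obtain ⟨x, rfl⟩ : ∃ x, x = s v0 := ⟨_, rfl⟩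
  generalize hxx : s v0 = x at *
  have hs : s x = -x := by rw [← hxx, D.ss]
  have hz := D.z0
  have n1 : ∀ y, s (s0 (s y)) = 0 := fun y => by
    apply hno
    · rw [← D.br2, D.s0s0]
    · rw [D.ss]
  have n2 : ∀ y, s (s2 (s y)) = 0 := fun y => by
    apply t_zero D
    apply hno
    · rw [D.s0t, D.ss, map_neg]
    · rw [D.st, D.br1, D.s2s2, map_neg]
  have n3 : ∀ y, s2 (s0 (s2 y)) = 0 := fun y => by
    apply t_zero D
    apply t_zero D
    apply hno
    · rw [D.s0t, D.st, D.s2s2, map_neg, map_neg]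
    · rw [D.st, D.s2t, D.br3, D.s0s0, map_neg, map_neg]
  have n4 : ∀ y, s0 (s2 (s0 y)) = 0 := fun y => by rw [← D.br3, n3]
  have A1 : s (s0 x) = 0 := by have := n1 x; rwa [hs, map_neg, map_neg, neg_eq_zero] at this
  have A2 : s (s2 x) = 0 := by have := n2 x; rwa [hs, map_neg, map_neg, neg_eq_zero] at this
  have E1 : c1 • x = t (s2 x) + t (s2 (s0 x)) := by
    rw [D.e1, hs, A2, ← map_add]; congr 1; rw [map_neg]; abel
  have E2 : c2 • t x = s0 x + s0 (s2 x) := by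
    rw [D.e2, hs, A1, map_neg]; abel
  have G1 : s2 (s0 x) = c2 • t (s0 x) := by
    have := congrArg s2 E2
    rw [map_add, n3, add_zero, map_smul, D.s2t] at this
    exact this.symm
  have G2 : c1 • s2 x = t (s0 (s2 x)) := by
    have := congrArg s2 E1
    rw [map_add, D.s2t, D.s2t, n4, map_zero, add_zero, map_smul] at this
    exact this
  have K1 : t (s2 x) = c1 • x - c2 • t (t (s0 x)) := by
    rw [G1, map_smul] at E1
    linear_combination (norm := module) -E1
  have K2 : t (s0 x) = c2 • t (t x) - c1 • s2 x := by
    have := congrArg t E2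
    rw [map_add, ← G2, map_smul] at this
    linear_combination (norm := module) -this
  have K3 : t (t (s0 x)) = (c2 * z) • x - c1 • t (s2 x) := by
    have := congrArg t K2
    rw [map_sub, map_smul, map_smul, D.t3] at this
    rw [this]
    module
  have L1 : (1 - c1 * c2) • t (t (s0 x)) = (c2 * z - c1 ^ 2) • x := by
    linear_combination (norm := module) K3 - c1 • K1
  have L2 : (1 - c1 * c2) • t (s2 x) = (c1 - c2 ^ 2 * z) • x := by
    linear_combination (norm := module) K1 - c2 • K3
  have st1 : s (t x) = t (s2 x) := D.st x
  have st2 : s (t (t x)) = t (t (s0 x)) := by rw [D.st, D.s2t]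
  by_cases hc : c1 * c2 = 1
  · have h1 : c2 * z = c1 ^ 2 := by
      rw [hc, sub_self, zero_smul] at L1
      exact sub_eq_zero.1 ((smul_eq_zero.1 L1.symm).resolve_right hv0)
    have hc1 : c1 ≠ 0 := by rintro rfl; simp at hc
    have hz3 : z = c1 ^ 3 := by linear_combination c1 * h1 - z * hc
    by_cases he : s2 x = 0
    · refine case_M2 D hv0 hc1 hz3 hs ?_ ?_
      · rw [st1, he, map_zero]
      · rw [st2, K3, he, h1]; simp
    · refine case_Mt2 D (x := t (s2 x)) (fun h => he (t_zero D h)) hc1 hz3 ?_ ?_ ?_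
      · rw [D.st, D.s2s2, map_neg]
      · rw [D.st, D.s2t, ← G2, map_smul]
      · rw [D.t3, map_smul, A2, smul_zero]
  · have hc' : 1 - c1 * c2 ≠ 0 := sub_ne_zero.2 (Ne.symm hc)
    obtain ⟨a, ha⟩ : ∃ a, a = (1 - c1 * c2)⁻¹ * (c2 * z - c1 ^ 2) * z⁻¹ := ⟨_, rfl⟩
    obtain ⟨b, hb⟩ : ∃ b, b = (1 - c1 * c2)⁻¹ * (c1 - c2 ^ 2 * z) := ⟨_, rfl⟩
    have M1 : t (t (s0 x)) = (a * z) • x := by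
      apply smul_right_injective V hc'
      simp only [L1, smul_smul]
      congr 1
      rw [ha, mul_assoc _ z⁻¹ z, inv_mul_cancel₀ hz, mul_one, mul_inv_cancel_left₀ hc']
    have M2 : t (s2 x) = b • x := by
      apply smul_right_injective V hc'
      simp only [L2, smul_smul]
      congr 1
      rw [hb]; field_simp
    have M3 : s0 x = a • t x := by
      apply t_inj D
      apply t_inj D
      rw [M1, map_smul, map_smul, D.t3, smul_smul]
    have hab : a * b = 0 := by
      rw [M3, map_smul, st1, M2, smul_smul] at A1
      exact (smul_eq_zero.1 A1).resolve_right hv0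
    have hC1 : c1 = b + a ^ 2 * z := by
      have : (c1 - (b + a ^ 2 * z)) • x = 0 := by
        rw [M2, M3, map_smul, map_smul, D.s2t, M1] at E1
        linear_combination (norm := module) E1
      exact sub_eq_zero.1 ((smul_eq_zero.1 this).resolve_right hv0)
    have hC2 : c2 * z = a * z + c1 * b := by
      have : (c2 * z - (a * z + c1 * b)) • x = 0 := by
        rw [M1, M2] at K3
        linear_combination (norm := module) -K3
      exact sub_eq_zero.1 ((smul_eq_zero.1 this).resolve_right hv0)
    refine case_three D hv0 hab ?_ ?_ hs (st1.trans M2) (st2.trans M1)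
    · intro h
      have hb0 : b = 0 := by
        refine (mul_eq_zero.1 hab).resolve_left ?_
        rintro rfl; simp at h
      subst hb0
      have : c2 = a := mul_right_cancel₀ hz (by linear_combination hC2)
      apply hc
      rw [hC1, this]; linear_combination h
    · intro h
      have ha0 : a = 0 := by
        refine (mul_eq_zero.1 hab).resolve_right ?_
        rintro rfl; apply hz; rw [← h]; simp
      subst ha0
      apply hc
      apply mul_right_cancel₀ hz
      have hcb : c1 = b := by linear_combination hC1
      rw [hcb] at hC2 ⊢
      linear_combination b * hC2 + h

end Aux2
section Aux3

variable {k V : Type} [Field k] [AddCommGroup V] [Module k V]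
    {t s s0 s2 : Module.End k V} {z c1 c2 : k}

/-- The multiplication table attached to a common `(-1)`-eigenvector `w` of `S_0` and `S_1`. -/
structure Tab (k V : Type) [Field k] [AddCommGroup V] [Module k V] (t s : Module.End k V)
    (z c1 c2 : k) (w u : V) : Prop where
  w0 : w ≠ 0
  a1 : s w = -w
  a2 : s (t w) = t (t u)
  a3 : s (t (t w)) = -t (t w)
  a4 : s u = c2 • w
  a5 : s (t u) = (c1 * z⁻¹) • t (t w)
  a6 : s (t (t u)) = -t (t u)

theorem tab_exists (D : Dat k V t s s0 s2 z c1 c2) {w : V} (hw : w ≠ 0) (h0 : s0 w = -w)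
    (h1 : s w = -w) : ∃ u, Tab k V t s z c1 c2 w u := by
  have hz := D.z0
  have hu : t (z⁻¹ • t (t (s2 w))) = s2 w := by
    rw [map_smul, D.t3, inv_smul_smul₀ hz]
  have E1 : c1 • w = t (s (s2 w)) := by
    rw [D.e1, h0, h1, map_neg, map_neg, h0]
    congr 1
    abel
  have E2 : c2 • t w = s0 (s2 w) := by
    rw [D.e2, h0, h1, map_neg, map_neg, h1]
    abel
  refine ⟨z⁻¹ • t (t (s2 w)), hw, h1, ?_, ?_, ?_, ?_, ?_⟩
  · rw [hu, D.st]
  · rw [D.st, D.s2t, h0, map_neg, map_neg]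
  · rw [map_smul, D.st, D.s2t, ← E2, map_smul, map_smul, D.t3, smul_comm, inv_smul_smul₀ hz]
  · rw [hu]
    apply t_inj D
    rw [← E1, map_smul, D.t3, smul_smul, inv_mul_cancel_right₀ hz]
  · rw [hu, D.st, D.s2s2, map_neg]

/-- `c₁ = c₂ = 0`. -/
theorem tab_zero (D : Dat k V t s s0 s2 z c1 c2) {w u : V} (B : Tab k V t s z c1 c2 w u)
    (h1 : c1 = 0) (h2 : c2 = 0) : Good k V t s := by
  have hz := D.z0
  have a4 : s u = 0 := by rw [B.a4, h2, zero_smul]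
  have a5 : s (t u) = 0 := by rw [B.a5, h1, zero_mul, zero_smul]
  have a6 := B.a6
  by_cases hu : u = 0
  · have a1 := B.a1
    have a2 : s (t w) = 0 := by rw [B.a2, hu, map_zero, map_zero]
    have a3 := B.a3
    iterate 12 right
    refine ⟨Units.mk0 z hz, iso3 D (v := w) ?_ _ ?_ ?_ ?_⟩
    · have ev : ∀ α β γ : k, α • w + β • t w + γ • t (t w) = 0 → β = 0 := by
        intro α β γ h
        have h' := congrArg s h
        simp only [map_add, map_smul, a1, a2, a3, map_zero] at h'
        have : β • t w = 0 := by linear_combination (norm := module) h + h'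
        exact (smul_eq_zero.1 this).resolve_right fun h => B.w0 (t_zero D h)
      have hs : ∀ α β γ : k, α • w + β • t w + γ • t (t w) = 0 →
          (γ * z) • w + α • t w + β • t (t w) = 0 := by
        intro α β γ h
        have h' := congrArg t h
        simp only [map_add, map_smul, D.t3, map_zero] at h'
        linear_combination (norm := module) h'
      intro α β γ h
      refine ⟨ev _ _ _ (hs _ _ _ h), ev _ _ _ h, ?_⟩
      exact (mul_eq_zero.1 (ev _ _ _ (hs _ _ _ (hs _ _ _ h)))).resolve_right hz
    · simp [a1]
    · simp [a2]
    · simp [a3]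
  · iterate 11 right
    left
    refine ⟨Units.mk0 z hz, iso3 D (v := u) ?_ _ ?_ ?_ ?_⟩
    · have ev : ∀ α β γ : k, α • u + β • t u + γ • t (t u) = 0 → γ = 0 := by
        intro α β γ h
        have h' := congrArg s h
        simp only [map_add, map_smul, a4, a5, a6, map_zero] at h'
        have : γ • t (t u) = 0 := by linear_combination (norm := module) -h'
        exact (smul_eq_zero.1 this).resolve_right fun h => hu (t_zero D (t_zero D h))
      have hs : ∀ α β γ : k, α • u + β • t u + γ • t (t u) = 0 →
          (γ * z) • u + α • t u + β • t (t u) = 0 := by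
        intro α β γ h
        have h' := congrArg t h
        simp only [map_add, map_smul, D.t3, map_zero] at h'
        linear_combination (norm := module) h'
      intro α β γ h
      exact ⟨ev _ _ _ (hs _ _ _ (hs _ _ _ h)), ev _ _ _ (hs _ _ _ h), ev _ _ _ h⟩
    · simp [a4]
    · simp [a5]
    · simp [a6]

/-- Independence in the generic case. -/
theorem tab_indep (D : Dat k V t s s0 s2 z c1 c2) {w u : V} (B : Tab k V t s z c1 c2 w u)
    (h1 : c1 ^ 2 ≠ z * c2) (h2 : c1 ≠ z * c2 ^ 2) :
    ∀ a0 a1 a2 b0 b1 b2 : k, a0 • u + a1 • t u + a2 • t (t u) + b0 • w + b1 • t w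
      + b2 • t (t w) = 0 → a0 = 0 ∧ a1 = 0 ∧ a2 = 0 ∧ b0 = 0 ∧ b1 = 0 ∧ b2 = 0 := by
  have hz := D.z0
  have hw := B.w0
  have a1 := B.a1
  have a2 := B.a2
  have a3 := B.a3
  have a4 := B.a4
  have a5 := B.a5
  have a6 := B.a6
  have htt : ∀ {x : V}, t (t x) = 0 → x = 0 := fun h => t_zero D (t_zero D h)
  have hsm : ∀ {a : k}, a • w = 0 → a = 0 := fun h => (smul_eq_zero.1 h).resolve_right hw
  have P1 : ∀ α β : k, α • u + β • w = 0 → α = 0 ∧ β = 0 := by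
    intro α β h
    have e1 := congrArg s h
    simp only [map_add, map_smul, a1, a4, map_zero] at e1
    have e1' : α * c2 - β = 0 := hsm (by linear_combination (norm := module) e1)
    have e2 := congrArg s (congrArg t h)
    simp only [map_add, map_smul, a5, a2, map_zero] at e2
    have e2' : β • u + (α * (c1 * z⁻¹)) • w = 0 := htt (by
      simp only [map_add, map_smul]; linear_combination (norm := module) e2)
    have e3 : α ^ 2 * (c1 - z * c2 ^ 2) = 0 := by
      have : (α ^ 2 * (c1 * z⁻¹) - β ^ 2) = 0 :=
        hsm (by linear_combination (norm := module) α • e2' - β • h)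
      have hz' : z * z⁻¹ = 1 := mul_inv_cancel₀ hz
      linear_combination z * this - α ^ 2 * c1 * hz' - z * (α * c2 + β) * e1'
    have hα : α = 0 := by
      simpa using (mul_eq_zero.1 e3).resolve_right (sub_ne_zero.2 h2)
    subst hα
    exact ⟨rfl, by linear_combination -e1'⟩
  have P2 : ∀ α β : k, α • u + β • t w = 0 → α = 0 ∧ β = 0 := by
    intro α β h
    have e1 := congrArg s (congrArg t h)
    simp only [map_add, map_smul, a3, a5, map_zero] at e1
    have e1' : α * (c1 * z⁻¹) - β = 0 := hsm (htt (by
      simp only [map_smul]; linear_combination (norm := module) e1))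
    have e2 := congrArg s h
    simp only [map_add, map_smul, a4, a2, map_zero] at e2
    have e3 := congrArg t (congrArg t h)
    simp only [map_add, map_smul, D.t3, map_zero] at e3
    have e4 : α ^ 2 * (c1 ^ 2 - z * c2) = 0 := by
      have : β ^ 2 * z - α ^ 2 * c2 = 0 :=
        hsm (by linear_combination (norm := module) β • e3 - α • e2)
      have hb : β * z = α * c1 := by
        have hz' : z * z⁻¹ = 1 := mul_inv_cancel₀ hz
        linear_combination -z * e1' + α * c1 * hz'
      linear_combination z * this - (β * z + α * c1) * hb
    have hα : α = 0 := by
      simpa using (mul_eq_zero.1 e4).resolve_right (sub_ne_zero.2 h1)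
    subst hα
    exact ⟨rfl, by linear_combination -e1'⟩
  have P3 : ∀ p q r : k, p • w + q • t (t w) + r • t (t u) = 0 → p = 0 ∧ q = 0 ∧ r = 0 := by
    intro p q r h
    have e1 := congrArg s (congrArg t (congrArg t h))
    simp only [map_add, map_smul, D.t3, a2, a3, a5, map_zero] at e1
    have e1' : (q * z) • u + (r * c1 - p) • w = 0 := htt (by
      have hz' : r * c1 = r * (z * (c1 * z⁻¹)) := by field_simp
      rw [hz']
      simp only [map_add, map_smul]; linear_combination (norm := module) e1)
    obtain ⟨f1, f2⟩ := P1 _ _ e1'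
    have e2 := congrArg t (congrArg s (congrArg t h))
    simp only [map_add, map_smul, D.t3, a1, a2, a4, map_zero, map_neg] at e2
    obtain ⟨f3, f4⟩ := P2 (p * z) (z * (r * c2 - q)) (by linear_combination (norm := module) e2)
    have hq : q = 0 := (mul_eq_zero.1 f1).resolve_right hz
    have hp : p = 0 := (mul_eq_zero.1 f3).resolve_right hz
    refine ⟨hp, hq, ?_⟩
    rw [hq, sub_zero] at f4
    rw [hp, sub_zero] at f2
    by_contra hr
    have hc1 : c1 = 0 := (mul_eq_zero.1 f2).resolve_left hr
    have hc2 : c2 = 0 := (mul_eq_zero.1 ((mul_eq_zero.1 f4).resolve_left hz)).resolve_left hr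
    apply h1
    rw [hc1, hc2]; ring
  have ev : ∀ a0' a1' a2' b0 b1 b2 : k, a0' • u + a1' • t u + a2' • t (t u) + b0 • w + b1 • t w
      + b2 • t (t w) = 0 → b0 = c2 * a0' ∧ b2 * z = c1 * a1' ∧ b1 = a2' := by
    intro a0' a1' a2' b0 b1 b2 h
    have h' := congrArg s h
    simp only [map_add, map_smul, a1, a2, a3, a4, a5, a6, map_zero] at h'
    obtain ⟨f1, f2, f3⟩ := P3 (a0' * c2 - b0) (a1' * (c1 * z⁻¹) - b2) (b1 - a2')
      (by linear_combination (norm := module) h')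
    have hz' : z * z⁻¹ = 1 := mul_inv_cancel₀ hz
    exact ⟨by linear_combination -f1, by linear_combination -z * f2 + a1' * c1 * hz',
      by linear_combination f3⟩
  have hs : ∀ a0' a1' a2' b0 b1 b2 : k, a0' • u + a1' • t u + a2' • t (t u) + b0 • w + b1 • t w
      + b2 • t (t w) = 0 → (a2' * z) • u + a0' • t u + a1' • t (t u) + (b2 * z) • w + b0 • t w
      + b1 • t (t w) = 0 := by
    intro a0' a1' a2' b0 b1 b2 h
    have h' := congrArg t h
    simp only [map_add, map_smul, D.t3, map_zero] at h'
    linear_combination (norm := module) h'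
  intro a0' a1' a2' b0 b1 b2 h
  obtain ⟨r1, r2, r3⟩ := ev _ _ _ _ _ _ h
  obtain ⟨r4, r5, r6⟩ := ev _ _ _ _ _ _ (hs _ _ _ _ _ _ h)
  obtain ⟨r7, r8, r9⟩ := ev _ _ _ _ _ _ (hs _ _ _ _ _ _ (hs _ _ _ _ _ _ h))
  have hα : a0' = 0 := by
    have : a0' * (c1 ^ 2 - z * c2) = 0 := by
      have x1 : a1' = c2 * a0' := by rw [← r6, r1]
      have x2 : b0 = c1 * a2' := mul_right_cancel₀ hz (by linear_combination r8)
      linear_combination -c1 * r5 + c1 * z * r3 - z * x2 + z * r1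
    exact (mul_eq_zero.1 this).resolve_right (sub_ne_zero.2 h1)
  subst hα
  have y0 : b0 = 0 := by rw [r1, mul_zero]
  have y1 : a1' = 0 := by rw [← r6, y0]
  have y2 : b1 = 0 := (mul_eq_zero.1 (r5.trans (mul_zero _))).resolve_right hz
  have y3 : a2' = 0 := by rw [← r3, y2]
  have y4 : b2 = 0 := (mul_eq_zero.1 (r2.trans (by rw [y1, mul_zero]))).resolve_right hz
  exact ⟨rfl, y1, y3, y0, y2, y4⟩

/-- The generic case. -/
theorem tab_generic (D : Dat k V t s s0 s2 z c1 c2) {w u : V} (B : Tab k V t s z c1 c2 w u)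
    (h1 : c1 ^ 2 ≠ z * c2) (h2 : c1 ≠ z * c2 ^ 2) : Good k V t s := by
  have hz := D.z0
  have hi := tab_indep D B h1 h2
  have a1 := B.a1
  have a2 := B.a2
  have a3 := B.a3
  have a4 := B.a4
  have a5 := B.a5
  have a6 := B.a6
  have hi' : ∀ e : k, e ≠ 0 → ∀ a0 a1 a2 b0 b1 b2 : k, a0 • (e • u) + a1 • t (e • u)
      + a2 • t (t (e • u)) + b0 • w + b1 • t w + b2 • t (t w) = 0 →
      a0 = 0 ∧ a1 = 0 ∧ a2 = 0 ∧ b0 = 0 ∧ b1 = 0 ∧ b2 = 0 := by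
    intro e he a0 a1 a2 b0 b1 b2 h
    simp only [map_smul, smul_smul] at h
    simpa [he] using hi _ _ _ _ _ _ h
  by_cases hc2 : c2 = 0
  · have hc1 : c1 ≠ 0 := by rintro rfl; exact h2 (by rw [hc2]; ring)
    iterate 9 right
    left
    refine ⟨Units.mk0 z hz, Units.mk0 c1 hc1,
      iso6 D (hi' (z / c1) (div_ne_zero hz hc1)) _ ?_⟩
    intro j
    rw [Fin.sum_univ_six]
    fin_cases j <;> simp [a1, a2, a3, a4, a5, a6, hc2, smul_smul, hz, hc1]
    rw [show z / c1 * (c1 * z⁻¹) = 1 by field_simp, one_smul]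
  · by_cases hc1 : c1 = 0
    · iterate 10 right
      left
      refine ⟨Units.mk0 z hz, Units.mk0 (z * c2) (mul_ne_zero hz hc2),
        iso6 D (hi' c2⁻¹ (inv_ne_zero hc2)) _ ?_⟩
      intro j
      rw [Fin.sum_univ_six]
      fin_cases j <;> simp [a1, a2, a3, a4, a5, a6, hc1, smul_smul, hz, hc2]
    · iterate 4 right
      left
      refine ⟨Units.mk0 z hz, Units.mk0 c1 hc1, Units.mk0 (z * c2) (mul_ne_zero hz hc2), h1, ?_,
        iso6 D (hi' c2⁻¹ (inv_ne_zero hc2)) _ ?_⟩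
      · simp only [Units.val_mk0]
        intro h
        apply h2
        apply mul_left_cancel₀ hz
        linear_combination -h
      · intro j
        rw [Fin.sum_univ_six]
        fin_cases j <;> simp [a1, a2, a3, a4, a5, a6, smul_smul, hz, hc2]
        congr 1
        field_simp

/-- The case `c₁ = z c₂²`. -/
theorem tab_a (D : Dat k V t s s0 s2 z c1 c2) {w u : V} (B : Tab k V t s z c1 c2 w u)
    (hc : c2 ≠ 0) (h : c1 = z * c2 ^ 2) : Good k V t s := by
  have hz := D.z0
  have hw := B.w0
  have b1 := B.a1
  have b2 := B.a2
  have b3 := B.a3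
  have b4 := B.a4
  have b5 : s (t u) = c2 ^ 2 • t (t w) := by
    rw [B.a5, h]; congr 1; field_simp
  have b6 := B.a6
  have hsm : ∀ {a : k}, a • w = 0 → a = 0 := fun h => (smul_eq_zero.1 h).resolve_right hw
  have htt : ∀ {x : V}, t (t x) = 0 → x = 0 := fun h => t_zero D (t_zero D h)
  have hd : u + c2 • w = 0 := by
    by_contra hd
    obtain ⟨d, rfl⟩ : ∃ d, u = d - c2 • w := ⟨u + c2 • w, by abel⟩
    rw [sub_add_cancel] at hd
    have d0 : s d = 0 := by
      simp only [map_sub, map_smul, b1] at b4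
      linear_combination (norm := module) b4
    have d2 : s (t (t d)) = -t (t d) := by
      simp only [map_sub, map_smul, b3] at b6
      linear_combination (norm := module) b6
    have d1 : s (t d) = c2 • t (t d) := by
      simp only [map_sub, map_smul, b2] at b5
      linear_combination (norm := module) b5
    obtain ⟨α, β, γ, hx⟩ := span_three D hd ⟨0, 0, 0, by rw [d0]; module⟩
      ⟨0, 0, c2, by rw [d1]; module⟩ ⟨0, 0, -1, by rw [d2]; module⟩ w
    have hx' := congrArg s hx
    simp only [map_add, map_smul, b1, d0, d1, d2] at hx'
    obtain ⟨δ, hδ⟩ : ∃ δ, δ = γ - β * c2 := ⟨_, rfl⟩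
    have hwd : w = δ • t (t d) := by
      rw [hδ]; linear_combination (norm := module) -hx'
    have hδ0 : δ ≠ 0 := by
      rintro rfl
      rw [zero_smul] at hwd
      exact hw hwd
    rw [hwd] at b3
    simp only [map_smul, D.t3, d1] at b3
    have e : (δ * z) • (t d + c2 • t (t d)) = 0 := by
      linear_combination (norm := module) b3
    have e1 : t (d + c2 • t d) = 0 := by
      rw [map_add, map_smul]
      exact (smul_eq_zero.1 e).resolve_left (mul_ne_zero hδ0 hz)
    have e2 := congrArg s (t_zero D e1)
    simp only [map_add, map_smul, d0, d1, map_zero, zero_add, smul_smul] at e2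
    exact hd (htt ((smul_eq_zero.1 e2).resolve_left (mul_ne_zero hc hc)))
  have hu : u = -(c2 • w) := eq_neg_of_add_eq_zero_left hd
  subst hu
  have b2' : s (t w) = -(c2 • t (t w)) := by
    rw [b2]; simp only [map_neg, map_smul]
  by_cases hy : c2 ^ 3 * z = 1
  · have hy1 : c2⁻¹ * c2 = 1 := inv_mul_cancel₀ hc
    by_cases hg : t w - c2⁻¹ • w = 0
    · right; left
      exact iso1 D hw (sub_eq_zero.1 hg) (by rw [b1]; module)
    · exfalso
      obtain ⟨y, rfl⟩ : ∃ y, c2 = y⁻¹ := ⟨c2⁻¹, (inv_inv _).symm⟩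
      rw [inv_inv] at hg hy1
      have hy0 : y ≠ 0 := fun e => hc (by rw [e, inv_zero])
      have hzy : z = y ^ 3 := by
        field_simp at hy
        exact hy
      obtain ⟨g, hgd⟩ : ∃ g, t w = g + y • w := ⟨t w - y • w, by abel⟩
      rw [hgd, add_sub_cancel_right] at hg
      have g3 : t (t g) = -(y • t g) - y ^ 2 • g := by
        have := D.t3 w
        rw [hgd] at this
        simp only [map_add, map_smul, hgd, hzy] at this
        linear_combination (norm := module) this
      have gt : g = t w - y • w := by rw [hgd]; abel
      have gs0 : s g = -g - y⁻¹ • t g := by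
        rw [gt]
        simp only [map_sub, map_smul, b1, b2']
        have : (y⁻¹ * y - 1) • t w = 0 := by rw [inv_mul_cancel₀ hy0, sub_self, zero_smul]
        linear_combination (norm := module) -this
      have gs1 : s (t g) = 0 := by
        rw [gt]
        simp only [map_sub, map_smul, b3, b2']
        have : (y * y⁻¹ - 1) • t (t w) = 0 := by rw [mul_inv_cancel₀ hy0, sub_self, zero_smul]
        linear_combination (norm := module) this
      have gs2 : s (t (t g)) = y ^ 2 • g + y • t g := by
        rw [g3]
        simp only [map_sub, map_neg, map_smul, gs0, gs1]
        have : (y * (y * y⁻¹ - 1)) • t g = 0 := by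
          rw [mul_inv_cancel₀ hy0, sub_self, mul_zero, zero_smul]
        linear_combination (norm := module) this
      obtain ⟨α, β, γ, hx⟩ := span_three D hg ⟨-1, -y⁻¹, 0, by rw [gs0]; module⟩
        ⟨0, 0, 0, by rw [gs1]; module⟩ ⟨y ^ 2, y, 0, by rw [gs2]; module⟩ w
      have hx' := congrArg s hx
      simp only [map_add, map_smul, b1, gs0, gs1, gs2] at hx'
      have hwd : w = (α - y ^ 2 * γ) • (g + y⁻¹ • t g) := by
        have : (γ * (y * (y * y⁻¹ - 1))) • t g = 0 := by
          rw [mul_inv_cancel₀ hy0, sub_self, mul_zero, mul_zero, zero_smul]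
        linear_combination (norm := module) -hx' + this
      have hc3 : s (t (t w)) = 0 := by
        rw [hwd]
        simp only [map_add, map_smul, D.t3, gs0, gs2]
        have e1 : y⁻¹ * z = y ^ 2 := by rw [hzy]; field_simp
        rw [smul_smul, e1]
        have : (y * (y * y⁻¹ - 1)) • t g = 0 := by
          rw [mul_inv_cancel₀ hy0, sub_self, mul_zero, zero_smul]
        linear_combination (norm := module) -(α - y ^ 2 * γ) • this
      rw [b3, neg_eq_zero] at hc3
      exact hw (htt hc3)
  · have L : ∀ p q : k, p • w + q • t (t w) = 0 → p = 0 ∧ q = 0 := by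
      intro p q h
      have e1 := congrArg s (congrArg t h)
      simp only [map_add, map_smul, D.t3, map_zero, b2', b1] at e1
      have e2 := congrArg s (congrArg t (congrArg t h))
      simp only [map_add, map_smul, D.t3, map_zero, b2', b3] at e2
      have e3 : p + q * z * c2 = 0 := hsm (t_zero D (t_zero D (by
        simp only [map_smul]; linear_combination (norm := module) -e2)))
      have e4 : p ^ 2 * c2 - q ^ 2 * z = 0 := hsm (by
        linear_combination (norm := module) q • e1 + (p * c2) • h)
      have e5 : q ^ 2 * (z * (c2 ^ 3 * z - 1)) = 0 := by
        linear_combination e4 - c2 * (p - q * z * c2) * e3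
      have hq : q = 0 := by
        simpa using (mul_eq_zero.1 e5).resolve_right (mul_ne_zero hz (sub_ne_zero.2 hy))
      subst hq
      exact ⟨by linear_combination e3, rfl⟩
    have ev : ∀ α β γ : k, α • w + β • t w + γ • t (t w) = 0 → α = 0 ∧ β * c2 + γ = 0 := by
      intro α β γ h
      have h' := congrArg s h
      simp only [map_add, map_smul, b1, b2', b3, map_zero] at h'
      exact L _ _ (by linear_combination (norm := module) -h')
    have hs : ∀ α β γ : k, α • w + β • t w + γ • t (t w) = 0 →
        (γ * z) • w + α • t w + β • t (t w) = 0 := by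
      intro α β γ h
      have h' := congrArg t h
      simp only [map_add, map_smul, D.t3, map_zero] at h'
      linear_combination (norm := module) h'
    iterate 6 right
    left
    refine ⟨Units.mk0 z hz, Units.mk0 c2⁻¹ (inv_ne_zero hc), ?_, iso3 D (v := w) ?_ _ ?_ ?_ ?_⟩
    · simp only [Units.val_mk0]
      intro h
      apply hy
      rw [← h]
      field_simp
    · intro α β γ h
      obtain ⟨r1, r2⟩ := ev _ _ _ h
      obtain ⟨r3, r4⟩ := ev _ _ _ (hs _ _ _ h)
      have hγ : γ = 0 := (mul_eq_zero.1 r3).resolve_right hz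
      refine ⟨r1, ?_, hγ⟩
      rw [hγ, add_zero] at r2
      exact (mul_eq_zero.1 r2).resolve_right hc
    · simp [b1]
    · simp [b2']
    · simp [b3]

theorem tab_b (D : Dat k V t s s0 s2 z c1 c2) {w u : V} (B : Tab k V t s z c1 c2 w u)
    (hc : c1 ≠ 0) (h : c1 ^ 2 = z * c2) : Good k V t s := by
  have hz := D.z0
  have hw := B.w0
  obtain ⟨m, hm⟩ : ∃ m, m = c1 * z⁻¹ := ⟨_, rfl⟩
  have hmz : m * z = c1 := by rw [hm, inv_mul_cancel_right₀ hz]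
  have hmc : c2 = c1 * m := mul_left_cancel₀ hz (by linear_combination -h - c1 * hmz)
  have b1 := B.a1
  have b2 := B.a2
  have b3 := B.a3
  have b4 : s u = (m ^ 2 * z) • w := by
    rw [B.a4, hmc, ← hmz]; congr 1; ring
  have b5 : s (t u) = m • t (t w) := by
    rw [B.a5, hm]
  have b6 := B.a6
  have hsm : ∀ {a : k}, a • w = 0 → a = 0 := fun h => (smul_eq_zero.1 h).resolve_right hw
  have htt : ∀ {x : V}, t (t x) = 0 → x = 0 := fun h => t_zero D (t_zero D h)
  have hd : u + m • t w = 0 := by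
    by_contra hd
    obtain ⟨d, rfl⟩ : ∃ d, u = d - m • t w := ⟨u + m • t w, by abel⟩
    rw [sub_add_cancel] at hd
    have d2 : s (t (t d)) = -t (t d) := by
      simp only [map_sub, map_smul, D.t3, b1] at b6
      linear_combination (norm := module) b6
    have d0 : s d = m • t (t d) := by
      simp only [map_sub, map_smul, D.t3] at b2
      simp only [map_sub, map_smul, b2] at b4
      linear_combination (norm := module) b4
    have d1 : s (t d) = 0 := by
      simp only [map_sub, map_smul, b3] at b5
      linear_combination (norm := module) b5
    obtain ⟨α, β, γ, hx⟩ := span_three D hd ⟨0, 0, m, by rw [d0]; module⟩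
      ⟨0, 0, 0, by rw [d1]; module⟩ ⟨0, 0, -1, by rw [d2]; module⟩ w
    have hx' := congrArg s hx
    simp only [map_add, map_smul, b1, d0, d1, d2] at hx'
    have hwd : w = (γ - α * m) • t (t d) := by
      linear_combination (norm := module) -hx'
    have hc3 : s (t (t w)) = 0 := by
      rw [hwd]
      simp only [map_smul, D.t3, d1, smul_zero]
    rw [b3, neg_eq_zero] at hc3
    exact hw (htt hc3)
  have hu : u = -(m • t w) := eq_neg_of_add_eq_zero_left hd
  subst hu
  have b2' : s (t w) = -(c1 • w) := by
    rw [b2, ← hmz]; simp only [map_neg, map_smul, D.t3, smul_smul]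
  have v0 : s (w - m • t (t w)) = -(w - m • t (t w)) := by
    simp only [map_sub, map_smul, b1, b3]; module
  have v1 : s (t (w - m • t (t w))) = 0 := by
    simp only [map_sub, map_smul, D.t3, b1, b2', smul_smul, hmz]; module
  have v2 : s (t (t (w - m • t (t w)))) =
      -(c1 • t (w - m • t (t w))) - t (t (w - m • t (t w))) := by
    simp only [map_sub, map_smul, D.t3, b2', b3, smul_smul, hmz]; module
  by_cases hy : c1 ^ 3 = z
  · have hm2 : m * c1 ^ 2 = 1 := mul_right_cancel₀ hc (by rw [← hy] at hmz; linear_combination hmz)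
    by_cases hv : w - m • t (t w) = 0
    · right; left
      refine iso1 D hw (y := c1) ?_ (by rw [b1]; module)
      have e := congrArg t hv
      simp only [map_sub, map_smul, D.t3, map_zero, smul_smul, hmz] at e
      exact sub_eq_zero.1 e
    · exfalso
      have v3 : t (t (w - m • t (t w))) =
          -(c1 • t (w - m • t (t w))) - c1 ^ 2 • (w - m • t (t w)) := by
        have : (m * c1 ^ 2 - 1) • t (t w) = 0 := by rw [hm2, sub_self, zero_smul]
        simp only [map_sub, map_smul, D.t3, smul_smul, hmz]
        linear_combination (norm := module) -this
      obtain ⟨α, β, γ, hx⟩ := span_three D hv ⟨-1, 0, 0, by rw [v0]; module⟩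
        ⟨0, 0, 0, by rw [v1]; module⟩ ⟨0, -c1, -1, by rw [v2]; module⟩ w
      have hx' := congrArg s hx
      simp only [map_add s, map_smul s, b1, v0, v1, v2] at hx'
      rw [v3] at hx'
      have hwd : w = (α - c1 ^ 2 * γ) • (w - m • t (t w)) := by
        linear_combination (norm := module) -hx'
      have e := congrArg (fun x => s (t x)) hwd
      simp only [b2'] at e
      rw [map_smul, map_smul, v1, smul_zero, neg_eq_zero] at e
      exact hc (hsm e)
  · have L : ∀ p q : k, p • w + q • t (t w) = 0 → p = 0 ∧ q = 0 := by
      intro p q h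
      have e1 := congrArg s (congrArg t h)
      simp only [map_add, map_smul, D.t3, map_zero, b2', b1] at e1
      have e2 := congrArg s (congrArg t (congrArg t h))
      simp only [map_add, map_smul, D.t3, map_zero, b2', b3] at e2
      have e3 : p * c1 + q * z = 0 := hsm (by linear_combination (norm := module) -e1)
      have e4 : p ^ 2 - q ^ 2 * z * c1 = 0 := hsm (by
        linear_combination (norm := module) q • e2 + p • h)
      have e5 : p ^ 2 * (c1 ^ 3 - z) = 0 := by
        linear_combination -z * e4 + c1 * (p * c1 - q * z) * e3
      have hp : p = 0 := by
        simpa using (mul_eq_zero.1 e5).resolve_right (sub_ne_zero.2 hy)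
      subst hp
      refine ⟨rfl, ?_⟩
      rw [zero_mul, zero_add] at e3
      exact (mul_eq_zero.1 e3).resolve_right hz
    have ev : ∀ α β γ : k, α • w + β • t w + γ • t (t w) = 0 → α + β * c1 = 0 ∧ γ = 0 := by
      intro α β γ h
      have h' := congrArg s h
      simp only [map_add, map_smul, b1, b2', b3, map_zero] at h'
      exact L _ _ (by linear_combination (norm := module) -h')
    have hs : ∀ α β γ : k, α • w + β • t w + γ • t (t w) = 0 →
        (γ * z) • w + α • t w + β • t (t w) = 0 := by
      intro α β γ h
      have h' := congrArg t h
      simp only [map_add, map_smul, D.t3, map_zero] at h'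
      linear_combination (norm := module) h'
    iterate 7 right
    left
    refine ⟨Units.mk0 z hz, Units.mk0 c1 hc, hy, iso3 D (v := w - m • t (t w)) ?_ _ ?_ ?_ ?_⟩
    · intro α β γ h
      simp only [map_sub, map_smul, D.t3, smul_smul, hmz] at h
      have h' : (α - β * c1) • w + (β - γ * c1) • t w + (γ - α * m) • t (t w) = 0 := by
        linear_combination (norm := module) h
      obtain ⟨r1, r2⟩ := ev _ _ _ h'
      obtain ⟨r3, r4⟩ := ev _ _ _ (hs _ _ _ h')
      rw [r4, zero_mul, add_zero] at r1
      have hα : α * (c1 ^ 3 - z) = 0 := by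
        linear_combination -z * r1 - z * c1 * r4 - z * c1 ^ 2 * r2 - α * c1 ^ 2 * hmz
      have hα0 : α = 0 := (mul_eq_zero.1 hα).resolve_right (sub_ne_zero.2 hy)
      subst hα0
      have hγ : γ = 0 := by linear_combination r2
      subst hγ
      exact ⟨rfl, by linear_combination r4, rfl⟩
    · rw [v0]; simp
    · rw [v1]; simp
    · rw [v2]; simp [sub_eq_add_neg]; abel

theorem case_w (D : Dat k V t s s0 s2 z c1 c2) {w : V} (hw : w ≠ 0) (h0 : s0 w = -w)
    (h1 : s w = -w) : Good k V t s := by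
  obtain ⟨u, B⟩ := tab_exists D hw h0 h1
  have hz := D.z0
  by_cases e1 : c1 ^ 2 = z * c2
  · by_cases hc : c1 = 0
    · refine tab_zero D B hc ?_
      rw [hc, zero_pow two_ne_zero] at e1
      exact (mul_eq_zero.1 e1.symm).resolve_left hz
    · exact tab_b D B hc e1
  · by_cases e2 : c1 = z * c2 ^ 2
    · by_cases hc : c2 = 0
      · exact tab_zero D B (by rw [e2, hc]; ring) hc
      · exact tab_a D B hc e2
    · exact tab_generic D B e1 e2

end Aux3

/-- Every simple `H_k`-module on which the center of `H_k` acts by scalars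
is isomorphic to one of: `M_1(0,y)`, `M_1(-1,y)`, `M_2(y)`, `M̃_2(y)` (`y ∈ k^×`);
`K_6(z,y,y')` (`z,y,y' ∈ k^×`, `y² ≠ y'`, `y'² ≠ zy`); `M_3(z,y)`, `M̃_3(z,y)`, `N_3(z,y)`,
`Ñ_3(z,y)` (`z,y ∈ k^×`, `y³ ≠ z`); `L_6(z,y)`, `L̃_6(z,y)` (`z,y ∈ k^×`); `P_3(z)`,
`P̃_3(z)` (`z ∈ k^×`). -/
theorem statement19 (p : ℕ) [Fact p.Prime] (k : Type) [Field k] [IsAlgClosed k] [CharP k p]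
    (V : Type) [AddCommGroup V] [Module k V] [Nontrivial V]
    (ρ : Hk k →ₐ[k] Module.End k V)
    (hsimple : ∀ W : Submodule k V, (∀ a : Hk k, ∀ x ∈ W, ρ a x ∈ W) → W = ⊥ ∨ W = ⊤)
    (hcentral : ∀ a ∈ Subring.center (Hk k), ∃ c : k,
      ρ a = algebraMap k (Module.End k V) c) :
    (∃ y : kˣ, IsoTo k V ρ 1 (Tmat1 k (y : k)) (Tmat1 k 0)) ∨
    (∃ y : kˣ, IsoTo k V ρ 1 (Tmat1 k (y : k)) (Tmat1 k (-1))) ∨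
    (∃ y : kˣ, IsoTo k V ρ 2 (Tmat2 k (y : k)) (SM2 k)) ∨
    (∃ y : kˣ, IsoTo k V ρ 2 (Tmat2 k (y : k)) (SMt2 k)) ∨
    (∃ z y y' : kˣ, (y : k) ^ 2 ≠ (y' : k) ∧ (y' : k) ^ 2 ≠ (z : k) * (y : k) ∧
      IsoTo k V ρ 6 (Tmat6 k (z : k)) (SK6 k (z : k) (y : k) (y' : k))) ∨
    (∃ z y : kˣ, (y : k) ^ 3 ≠ (z : k) ∧ IsoTo k V ρ 3 (Tmat3 k (z : k)) (SM3 k (y : k))) ∨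
    (∃ z y : kˣ, (y : k) ^ 3 ≠ (z : k) ∧ IsoTo k V ρ 3 (Tmat3 k (z : k)) (SMt3 k (y : k))) ∨
    (∃ z y : kˣ, (y : k) ^ 3 ≠ (z : k) ∧ IsoTo k V ρ 3 (Tmat3 k (z : k)) (SN3 k (y : k))) ∨
    (∃ z y : kˣ, (y : k) ^ 3 ≠ (z : k) ∧ IsoTo k V ρ 3 (Tmat3 k (z : k)) (SNt3 k (y : k))) ∨
    (∃ z y : kˣ, IsoTo k V ρ 6 (Tmat6 k (z : k)) (SL6 k (z : k) (y : k))) ∨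
    (∃ z y : kˣ, IsoTo k V ρ 6 (Tmat6 k (z : k)) (SLt6 k (z : k) (y : k))) ∨
    (∃ z : kˣ, IsoTo k V ρ 3 (Tmat3 k (z : k)) (SP3 k)) ∨
    (∃ z : kˣ, IsoTo k V ρ 3 (Tmat3 k (z : k)) (SPt3 k)) := by
  obtain ⟨s0, s2, z, c1, c2, D⟩ := dat_exists k V ρ hsimple hcentral
  have key : Good k V (ρ (HeckeAlg.T k 0)) (ρ (HeckeAlg.S1 k 0)) := by
    by_cases h : ∃ w, w ≠ 0 ∧ s0 w = -w ∧ ρ (HeckeAlg.S1 k 0) w = -w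
    · obtain ⟨w, hw, h0, h1⟩ := h
      exact case_w D hw h0 h1
    · refine case_no D fun w h0 h1 => ?_
      by_contra hw
      exact h ⟨w, hw, h0, h1⟩
  exact key
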